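/- arXiv:1702.00709 — 3 statements merged into one kernel-verified Lean document; each statement's English description precedes it below -/
import Mathlib

section
/- Let p ≥ 1 and let g : ℝ^p → ℝ be twice continuously differentiable, μ-strongly convex (∇²g(x) ⪰ μI for all x, with μ > 0), with Hessians Lipschitz continuous with constant L̃ > 0. Fix x* ∈ ℝ^p and set M = ∇²g(x*)^{−1/2}. Then for any z, z⁺ ∈ ℝ^p with s := z⁺ − z ≠ 0 and y := ∇g(z⁺) − ∇g(z), one has ‖My − M⁻¹s‖ ≤ (L̃/μ) · max{‖z − x*‖, ‖z⁺ − x*‖} · ‖M⁻¹s‖. -/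
open Matrix Filter RealInnerProductSpace

noncomputable section

abbrev Vec (p : ℕ) := EuclideanSpace ℝ (Fin p)
abbrev Mat (p : ℕ) := Matrix (Fin p) (Fin p) ℝ

/-- A matrix acting on Euclidean space as a linear map. -/
def applyM {p : ℕ} (A : Mat p) (v : Vec p) : Vec p := Matrix.toEuclideanCLM (𝕜 := ℝ) A v

/-- Operator norm of a matrix induced by the Euclidean vector norm. -/
def opNorm {p : ℕ} (A : Mat p) : ℝ := ‖Matrix.toEuclideanCLM (𝕜 := ℝ) A‖

/-- `H` is the Hessian (matrix of second derivatives) of `g`. -/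
def HasHessian {p : ℕ} (g : Vec p → ℝ) (H : Vec p → Mat p) : Prop :=
  ∀ x, HasFDerivAt (gradient g) (Matrix.toEuclideanCLM (𝕜 := ℝ) (H x) : Vec p →L[ℝ] Vec p) x

/-- for a strongly convex `g` with Lipschitz Hessian and
`M = ∇²g(x*)^{-1/2}`, the secant pair `(s, y)` satisfies
`‖My − M⁻¹s‖ ≤ (L̃/μ)·max{‖z − x*‖, ‖z⁺ − x*‖}·‖M⁻¹s‖`. -/
theorem stmt3 (p : ℕ) (hp : 1 ≤ p) (g : Vec p → ℝ) (H : Vec p → Mat p)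
    (hg : ContDiff ℝ 2 g) (hH : HasHessian g H)
    (μ : ℝ) (hμ : 0 < μ)
    (hstrong : ∀ x : Vec p, ∀ v : Vec p, μ * ‖v‖^2 ≤ ⟪v, applyM (H x) v⟫)
    (Ltil : ℝ) (hLtil : 0 < Ltil)
    (hLip : ∀ u v : Vec p, opNorm (H u - H v) ≤ Ltil * ‖u - v‖)
    (xstar : Vec p) (M : Mat p)
    (hMdef : M.PosDef ∧ M * H xstar * M = 1) :
    ∀ z zp : Vec p, zp - z ≠ 0 →
      ‖applyM M (gradient g zp - gradient g z) - applyM M⁻¹ (zp - z)‖ ≤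
        (Ltil / μ) * max ‖z - xstar‖ ‖zp - xstar‖ * ‖applyM M⁻¹ (zp - z)‖ := by
  classical
  intro z zp _
  obtain ⟨hM, hMHM⟩ := hMdef
  set T := Matrix.toEuclideanCLM (𝕜 := ℝ) (n := Fin p) with hT
  have hmul : ∀ (A B : Mat p) (v : Vec p), T (A * B) v = T A (T B v) := by
    intro A B v; rw [map_mul]; rfl
  have hone : ∀ v : Vec p, T 1 v = v := by
    intro v; rw [map_one]; rfl
  have hsym : ∀ u v : Vec p, ⟪T M u, v⟫ = ⟪u, T M v⟫ := by
    intro u v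
    have h1 : T M = ContinuousLinearMap.adjoint (T M) := by
      have : T (star M) = star (T M) := map_star T M
      rw [← ContinuousLinearMap.star_eq_adjoint, ← this]
      congr 1
      exact hM.1.symm
    conv_lhs => rw [h1]
    rw [ContinuousLinearMap.adjoint_inner_left]
  have hinv : M⁻¹ = M * H xstar := Matrix.inv_eq_left_inv hMHM
  have hMM : M * M⁻¹ = 1 := by
    have := Matrix.inv_eq_left_inv hMHM
    exact mul_eq_one_comm.mp (by rw [this]; exact hMHM)
  have hMn : ∀ v : Vec p, μ * ‖T M v‖ ^ 2 ≤ ‖v‖ ^ 2 := by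
    intro v
    have h := hstrong xstar (T M v)
    have h2 : ⟪T M v, applyM (H xstar) (T M v)⟫ = ‖v‖ ^ 2 := by
      show ⟪T M v, T (H xstar) (T M v)⟫ = _
      rw [hsym, ← hmul, ← hmul, hMHM, hone, real_inner_self_eq_norm_sq]
    rw [h2] at h
    exact h
  set R := max ‖z - xstar‖ ‖zp - xstar‖ with hR
  have hR0 : 0 ≤ R := le_max_of_le_left (norm_nonneg _)
  have hmv : ‖gradient g zp - gradient g z - T (H xstar) (zp - z)‖ ≤ Ltil * R * ‖zp - z‖ := by
    refine Convex.norm_image_sub_le_of_norm_hasFDerivWithin_le' (s := Metric.closedBall xstar R)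
      (f' := fun x => T (H x)) (fun x _ => (hH x).hasFDerivWithinAt) ?_
      (convex_closedBall _ _) ?_ ?_
    · intro x hx
      rw [← map_sub]
      refine (hLip x xstar).trans ?_
      rw [Metric.mem_closedBall, dist_eq_norm] at hx
      gcongr
    · rw [Metric.mem_closedBall, dist_eq_norm]; exact le_max_left _ _
    · rw [Metric.mem_closedBall, dist_eq_norm]; exact le_max_right _ _
  have hlhs : applyM M (gradient g zp - gradient g z) - applyM M⁻¹ (zp - z)
      = T M (gradient g zp - gradient g z - T (H xstar) (zp - z)) := by
    rw [map_sub (T M), ← hmul, ← hinv]; rfl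
  have hs : T M (applyM M⁻¹ (zp - z)) = zp - z := by
    show T M (T M⁻¹ (zp - z)) = _
    rw [← hmul, hMM, hone]
  rw [hlhs]
  set w := gradient g zp - gradient g z - T (H xstar) (zp - z)
  set q := applyM M⁻¹ (zp - z)
  have h1 := hMn w
  have h2 := hMn q
  rw [hs] at h2
  have hC : 0 ≤ Ltil * R := by positivity
  refine (sq_le_sq₀ (norm_nonneg _) (by positivity)).mp ?_
  have h3 : ‖w‖ ^ 2 ≤ (Ltil * R) ^ 2 * ‖zp - z‖ ^ 2 := by
    rw [← mul_pow]; gcongr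
  have h4 : μ ^ 2 * ‖T M w‖ ^ 2 ≤ (Ltil * R) ^ 2 * ‖q‖ ^ 2 := by
    calc μ ^ 2 * ‖T M w‖ ^ 2 = μ * (μ * ‖T M w‖ ^ 2) := by ring
      _ ≤ μ * ((Ltil * R) ^ 2 * ‖zp - z‖ ^ 2) := mul_le_mul_of_nonneg_left (h1.trans h3) hμ.le
      _ = (Ltil * R) ^ 2 * (μ * ‖zp - z‖ ^ 2) := by ring
      _ ≤ _ := by gcongr
  have h5 : (Ltil / μ * R * ‖q‖) ^ 2 = (Ltil * R) ^ 2 * ‖q‖ ^ 2 / μ ^ 2 := by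
    field_simp
  rw [h5, le_div_iff₀ (by positivity)]
  linarith

end
end

section
/- Let p, n ≥ 1 and let each f_i : ℝ^p → ℝ (i = 1,…,n) be twice continuously differentiable with L̃-Lipschitz Hessians, and let x* ∈ ℝ^p satisfy (1/n)Σ_{i=1}^n ∇f_i(x*) = 0. Let z_1,…,z_n ∈ ℝ^p and let B_1,…,B_n ∈ ℝ^{p×p} be matrices such that (1/n)Σ_{i=1}^n B_i is invertible, and set Γ = ‖((1/n)Σ_{i=1}^n B_i)⁻¹‖ (operator norm) and x⁺ = ((1/n)Σ_{i=1}^n B_i)⁻¹ [ (1/n)Σ_{i=1}^n B_i z_i − (1/n)Σ_{i=1}^n ∇f_i(z_i) ]. Then ‖x⁺ − x*‖ ≤ (L̃Γ/n) Σ_{i=1}^n ‖z_i − x*‖² + (Γ/n) Σ_{i=1}^n ‖(B_i − ∇²f_i(x*))(z_i − x*)‖. -/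
open Matrix Filter RealInnerProductSpace

noncomputable section

theorem aux_taylor {p : ℕ} (g : Vec p → ℝ) (H : Vec p → Mat p) (hH : HasHessian g H)
    (L : ℝ) (hL : 0 < L) (hLip : ∀ u v : Vec p, opNorm (H u - H v) ≤ L * ‖u - v‖)
    (x z : Vec p) :
    ‖gradient g z - gradient g x - applyM (H x) (z - x)‖ ≤ L * ‖z - x‖ ^ 2 := by
  have h := (convex_closedBall x ‖z - x‖).norm_image_sub_le_of_norm_hasFDerivWithin_le'
    (f := gradient g) (f' := fun u => Matrix.toEuclideanCLM (𝕜 := ℝ) (H u))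
    (φ := Matrix.toEuclideanCLM (𝕜 := ℝ) (H x)) (C := L * ‖z - x‖) (x := x) (y := z)
    (fun u _ => (hH u).hasFDerivWithinAt)
    (fun u hu => by
      have h1 := hLip u x
      unfold opNorm at h1
      rw [map_sub] at h1
      refine h1.trans ?_
      have : ‖u - x‖ ≤ ‖z - x‖ := by simpa [dist_eq_norm] using hu
      gcongr)
    (by simp) (by simp [dist_eq_norm])
  calc _ ≤ _ := h
    _ = _ := by ring

/-- Lemma 2 of the paper: the IQN-type iterate `x⁺` satisfies
`‖x⁺ − x*‖ ≤ (L̃Γ/n) Σᵢ ‖zᵢ − x*‖² + (Γ/n) Σᵢ ‖(Bᵢ − ∇²fᵢ(x*))(zᵢ − x*)‖`. -/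
theorem stmt4 (p n : ℕ) (hp : 1 ≤ p) (hn : 1 ≤ n)
    (f : Fin n → Vec p → ℝ) (H : Fin n → Vec p → Mat p)
    (hf : ∀ i, ContDiff ℝ 2 (f i)) (hH : ∀ i, HasHessian (f i) (H i))
    (Ltil : ℝ) (hLtil : 0 < Ltil)
    (hLip : ∀ i, ∀ u v : Vec p, opNorm (H i u - H i v) ≤ Ltil * ‖u - v‖)
    (xstar : Vec p) (hopt : (n : ℝ)⁻¹ • ∑ i, gradient (f i) xstar = 0)
    (z : Fin n → Vec p) (B : Fin n → Mat p)
    (hinv : IsUnit ((n : ℝ)⁻¹ • ∑ i, B i)) :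
    ‖applyM ((n : ℝ)⁻¹ • ∑ i, B i)⁻¹
        ((n : ℝ)⁻¹ • ∑ i, applyM (B i) (z i) - (n : ℝ)⁻¹ • ∑ i, gradient (f i) (z i))
      - xstar‖ ≤
      (Ltil * opNorm ((n : ℝ)⁻¹ • ∑ i, B i)⁻¹ / n) * ∑ i, ‖z i - xstar‖^2
      + (opNorm ((n : ℝ)⁻¹ • ∑ i, B i)⁻¹ / n) *
          ∑ i, ‖applyM (B i - H i xstar) (z i - xstar)‖ := by
  have hM : ((n : ℝ)⁻¹ • ∑ i, B i)⁻¹ * ((n : ℝ)⁻¹ • ∑ i, B i) = 1 :=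
    Matrix.nonsing_inv_mul _ ((Matrix.isUnit_iff_isUnit_det _).1 hinv)
  have hMx : applyM ((n : ℝ)⁻¹ • ∑ i, B i)⁻¹
      ((n : ℝ)⁻¹ • ∑ i, applyM (B i) xstar) = xstar := by
    have h1 : (n : ℝ)⁻¹ • ∑ i, applyM (B i) xstar
        = applyM ((n : ℝ)⁻¹ • ∑ i, B i) xstar := by
      unfold applyM
      rw [map_smul, map_sum]
      simp
    rw [h1]
    unfold applyM
    rw [← mul_apply_eq_comp, ← map_mul, hM, map_one]
    rfl
  generalize ((n : ℝ)⁻¹ • ∑ i, B i)⁻¹ = N at *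
  have key : applyM N
        ((n : ℝ)⁻¹ • ∑ i, applyM (B i) (z i) - (n : ℝ)⁻¹ • ∑ i, gradient (f i) (z i)) - xstar
      = applyM N ((n : ℝ)⁻¹ • ∑ i, (applyM (B i - H i xstar) (z i - xstar)
        - (gradient (f i) (z i) - gradient (f i) xstar - applyM (H i xstar) (z i - xstar)))) := by
    have e : (n : ℝ)⁻¹ • ∑ i, (applyM (B i - H i xstar) (z i - xstar)
        - (gradient (f i) (z i) - gradient (f i) xstar - applyM (H i xstar) (z i - xstar)))
        = ((n : ℝ)⁻¹ • ∑ i, applyM (B i) (z i) - (n : ℝ)⁻¹ • ∑ i, gradient (f i) (z i))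
          - (n : ℝ)⁻¹ • ∑ i, applyM (B i) xstar := by
      have e1 : ∀ i, (applyM (B i - H i xstar) (z i - xstar)
        - (gradient (f i) (z i) - gradient (f i) xstar - applyM (H i xstar) (z i - xstar)))
        = applyM (B i) (z i) - gradient (f i) (z i) - applyM (B i) xstar
          + gradient (f i) xstar := by
        intro i
        unfold applyM
        simp only [map_sub, _root_.sub_apply]
        abel
      rw [Finset.sum_congr rfl fun i _ => e1 i, Finset.sum_add_distrib, smul_add, hopt,
        Finset.sum_sub_distrib, Finset.sum_sub_distrib, smul_sub, smul_sub, add_zero]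
    rw [e]
    conv_lhs => rw [← hMx]
    unfold applyM
    simp only [map_sub]
  rw [key]
  have hN : 0 ≤ opNorm N := norm_nonneg _
  have hb : ‖∑ i, (applyM (B i - H i xstar) (z i - xstar)
        - (gradient (f i) (z i) - gradient (f i) xstar - applyM (H i xstar) (z i - xstar)))‖
      ≤ ∑ i, (‖applyM (B i - H i xstar) (z i - xstar)‖ + Ltil * ‖z i - xstar‖ ^ 2) := by
    refine (norm_sum_le _ _).trans (Finset.sum_le_sum fun i _ => ?_)
    refine (norm_sub_le _ _).trans ?_
    gcongr
    exact aux_taylor (f i) (H i) (hH i) Ltil hLtil (hLip i) xstar (z i)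
  refine (ContinuousLinearMap.le_opNorm (Matrix.toEuclideanCLM (𝕜 := ℝ) N) _).trans ?_
  change opNorm N * _ ≤ _
  rw [norm_smul, Real.norm_of_nonneg (by positivity)]
  calc _ ≤ opNorm N * ((n : ℝ)⁻¹ * ∑ i, (‖applyM (B i - H i xstar) (z i - xstar)‖
          + Ltil * ‖z i - xstar‖ ^ 2)) := by gcongr
    _ = _ := by
      rw [Finset.sum_add_distrib, ← Finset.mul_sum]
      ring

end
end

section
/- Consider the IQN setup and iteration. For any r ∈ (0,1) there exist positive constants ε(r) and δ(r) such that: if ‖x⁰ − x*‖ < ε(r) and ‖B_i⁰ − ∇²f_i(x*)‖_{M_i} < δ(r) for M_i = ∇²f_i(x*)^{−1/2} and every i = 1,…,n, then for all t ≥ 1 the iterates satisfy ‖x^t − x*‖ ≤ r^{⌊(t−1)/n⌋+1} ‖x⁰ − x*‖, and moreover there is a constant C > 0 such that ‖B_i^t‖ ≤ C and ‖(B_i^t)⁻¹‖ ≤ C for all i and all t (in particular every B_i^t is invertible). -/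
open Matrix Filter RealInnerProductSpace

noncomputable section

/-- Frobenius norm of a matrix. -/
def frobNorm {p : ℕ} (A : Mat p) : ℝ := Real.sqrt (∑ i, ∑ j, (A i j)^2)

/-- Weighted matrix norm ‖A‖_M = ‖M A M‖_F. -/
def wNorm {p : ℕ} (M A : Mat p) : ℝ := frobNorm (M * A * M)

/-- Underlying function of a Euclidean vector. -/
def toFn {p : ℕ} (v : Vec p) : Fin p → ℝ := (WithLp.equiv 2 (Fin p → ℝ)) v

/-- Outer product a bᵀ. -/
def outer {p : ℕ} (a b : Vec p) : Mat p := Matrix.vecMulVec (toFn a) (toFn b)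

/-- Bilinear form uᵀ B v. -/
def quadForm {p : ℕ} (B : Mat p) (u v : Vec p) : ℝ := toFn u ⬝ᵥ B.mulVec (toFn v)

/-- Dot product aᵀ b. -/
def dotV {p : ℕ} (a b : Vec p) : ℝ := toFn a ⬝ᵥ toFn b

/-- The BFGS update  B⁺ = B + yyᵀ/(yᵀs) − B s sᵀ B/(sᵀ B s). -/
def bfgsUpdate {p : ℕ} (B : Mat p) (s y : Vec p) : Mat p :=
  B + (dotV y s)⁻¹ • outer y y - (quadForm B s s)⁻¹ • (B * outer s s * B)

/-- The cyclic index `i_t = (t mod n) + 1` (0-indexed: `t mod n`). -/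
def cyc {n : ℕ} (hn : 1 ≤ n) (t : ℕ) : Fin n := ⟨t % n, Nat.mod_lt t hn⟩

/-- The IQN problem data: `n` twice continuously differentiable sample functions
`f i : ℝ^p → ℝ`, `μ`-strongly convex with `L`-Lipschitz gradients and `L̃`-Lipschitz
Hessians, and the optimizer `x*` of `f = (1/n) Σ f i`. -/
structure IQNProblem (p n : ℕ) where
  hp : 1 ≤ p
  hn : 1 ≤ n
  f : Fin n → Vec p → ℝ
  Hess : Fin n → Vec p → Mat p
  mu : ℝ
  Lg : ℝ
  Ltil : ℝ
  xstar : Vec p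
  hmu : 0 < mu
  hmuL : mu ≤ Lg
  hLtil : 0 < Ltil
  hC2 : ∀ i, ContDiff ℝ 2 (f i)
  hHess : ∀ i, HasHessian (f i) (Hess i)
  hlow : ∀ i, ∀ x xh : Vec p,
    mu * ‖x - xh‖^2 ≤ ⟪gradient (f i) x - gradient (f i) xh, x - xh⟫
  hup : ∀ i, ∀ x xh : Vec p,
    ⟪gradient (f i) x - gradient (f i) xh, x - xh⟫ ≤ Lg * ‖x - xh‖^2
  hLip : ∀ i, ∀ u v : Vec p, opNorm (Hess i u - Hess i v) ≤ Ltil * ‖u - v‖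
  hopt : gradient (fun x => (n : ℝ)⁻¹ * ∑ i, f i x) xstar = 0
  hmin : ∀ x : Vec p, (n : ℝ)⁻¹ * ∑ i, f i xstar ≤ (n : ℝ)⁻¹ * ∑ i, f i x

/-- A run of the IQN iteration: sequences `x^t`, `z_i^t` and symmetric matrices `B_i^t`
following the IQN update with cyclic index, all steps assumed well defined. -/
structure IQNState {p n : ℕ} (P : IQNProblem p n) where
  x : ℕ → Vec p
  z : Fin n → ℕ → Vec p
  B : Fin n → ℕ → Mat p
  hz0 : ∀ i, z i 0 = x 0
  hsym : ∀ i t, (B i t).IsSymm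
  hinv : ∀ t, IsUnit ((n : ℝ)⁻¹ • ∑ i, B i t)
  hx : ∀ t, x (t+1) = applyM ((n : ℝ)⁻¹ • ∑ i, B i t)⁻¹
      ((n : ℝ)⁻¹ • ∑ i, applyM (B i t) (z i t) - (n : ℝ)⁻¹ • ∑ i, gradient (P.f i) (z i t))
  hzupd : ∀ t, z (cyc P.hn t) (t+1) = x (t+1)
  hzfix : ∀ t, ∀ j, j ≠ cyc P.hn t → z j (t+1) = z j t
  hs : ∀ t, z (cyc P.hn t) (t+1) - z (cyc P.hn t) t ≠ 0
  hys : ∀ t, dotV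
      (gradient (P.f (cyc P.hn t)) (z (cyc P.hn t) (t+1)) -
        gradient (P.f (cyc P.hn t)) (z (cyc P.hn t) t))
      (z (cyc P.hn t) (t+1) - z (cyc P.hn t) t) ≠ 0
  hsBs : ∀ t, quadForm (B (cyc P.hn t) t)
      (z (cyc P.hn t) (t+1) - z (cyc P.hn t) t)
      (z (cyc P.hn t) (t+1) - z (cyc P.hn t) t) ≠ 0
  hBupd : ∀ t, B (cyc P.hn t) (t+1) = bfgsUpdate (B (cyc P.hn t) t)
      (z (cyc P.hn t) (t+1) - z (cyc P.hn t) t)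
      (gradient (P.f (cyc P.hn t)) (z (cyc P.hn t) (t+1)) -
        gradient (P.f (cyc P.hn t)) (z (cyc P.hn t) t))
  hBfix : ∀ t, ∀ j, j ≠ cyc P.hn t → B j (t+1) = B j t

section Helpers

lemma dotV_eq {p : ℕ} (a b : Vec p) : dotV a b = ⟪a, b⟫ := by
  simp [dotV, toFn, dotProduct, PiLp.inner_apply, mul_comm]

lemma quadForm_eq {p : ℕ} (B : Mat p) (u v : Vec p) : quadForm B u v = ⟪u, applyM B v⟫ := by
  rw [applyM, Matrix.inner_toEuclideanCLM]; rfl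

lemma applyM_mul {p : ℕ} (A B : Mat p) (v : Vec p) : applyM (A * B) v = applyM A (applyM B v) := by
  simp [applyM]

lemma applyM_one {p : ℕ} (v : Vec p) : applyM (1 : Mat p) v = v := by
  simp [applyM]

lemma applyM_sub {p : ℕ} (A B : Mat p) (v : Vec p) :
    applyM (A - B) v = applyM A v - applyM B v := by
  simp [applyM]

lemma applyM_vsub {p : ℕ} (A : Mat p) (v w : Vec p) :
    applyM A (v - w) = applyM A v - applyM A w := by
  simp [applyM]

lemma applyM_norm_le {p : ℕ} (A : Mat p) (v : Vec p) : ‖applyM A v‖ ≤ opNorm A * ‖v‖ :=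
  ContinuousLinearMap.le_opNorm _ _

lemma opNorm_le {p : ℕ} (A : Mat p) (C : ℝ) (hC : 0 ≤ C) (h : ∀ v, ‖applyM A v‖ ≤ C * ‖v‖) :
    opNorm A ≤ C :=
  ContinuousLinearMap.opNorm_le_bound _ hC h

lemma opNorm_nonneg {p : ℕ} (A : Mat p) : 0 ≤ opNorm A := norm_nonneg _

lemma inner_applyM {p : ℕ} (A : Mat p) (u v : Vec p) :
    ⟪u, applyM A v⟫ = ⟪applyM Aᵀ u, v⟫ := by
  rw [← quadForm_eq, real_inner_comm, ← quadForm_eq, quadForm, quadForm]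
  rw [Matrix.dotProduct_mulVec, ← Matrix.mulVec_transpose, dotProduct_comm]

lemma toFn_applyM {p : ℕ} (A : Mat p) (v : Vec p) : toFn (applyM A v) = A *ᵥ toFn v := rfl

lemma mul_outer {p : ℕ} (A : Mat p) (a b : Vec p) : A * outer a b = outer (applyM A a) b := by
  rw [outer, outer, Matrix.mul_vecMulVec, toFn_applyM]

lemma outer_mul {p : ℕ} (A : Mat p) (a b : Vec p) : outer a b * A = outer a (applyM Aᵀ b) := by
  rw [outer, outer, Matrix.vecMulVec_mul, toFn_applyM, Matrix.mulVec_transpose]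

lemma trace_outer {p : ℕ} (a b : Vec p) : (outer a b).trace = ⟪a, b⟫ := by
  rw [outer, Matrix.trace_vecMulVec, ← dotV_eq]; rfl

lemma applyM_outer {p : ℕ} (a b v : Vec p) : applyM (outer a b) v = ⟪b, v⟫ • a := by
  rw [← dotV_eq]
  ext i
  change toFn (applyM (outer a b) v) i = _
  rw [toFn_applyM, outer, Matrix.vecMulVec_mulVec]
  simp [dotV, toFn, mul_comm]

lemma outer_add_left {p : ℕ} (a b c : Vec p) : outer (a + b) c = outer a c + outer b c := by
  ext i j; simp [outer, toFn, Matrix.vecMulVec_apply, add_mul]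
lemma outer_add_right {p : ℕ} (a b c : Vec p) : outer a (b + c) = outer a b + outer a c := by
  ext i j; simp [outer, toFn, Matrix.vecMulVec_apply, mul_add]

attribute [local instance] Matrix.frobeniusNormedAddCommGroup Matrix.frobeniusNormedSpace

lemma frobNorm_eq {p : ℕ} (A : Mat p) : frobNorm A = ‖A‖ := by
  rw [frobNorm, Matrix.frobenius_norm_def, Real.sqrt_eq_rpow]
  simp

lemma frobNorm_nonneg {p : ℕ} (A : Mat p) : 0 ≤ frobNorm A := Real.sqrt_nonneg _

lemma frobNorm_add {p : ℕ} (A B : Mat p) : frobNorm (A + B) ≤ frobNorm A + frobNorm B := by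
  simp only [frobNorm_eq]; exact norm_add_le _ _

lemma frobNorm_smul {p : ℕ} (c : ℝ) (A : Mat p) : frobNorm (c • A) = |c| * frobNorm A := by
  simp only [frobNorm_eq]; exact norm_smul _ _

lemma frobNorm_sq {p : ℕ} (A : Mat p) : (frobNorm A)^2 = (Aᵀ * A).trace := by
  rw [frobNorm, Real.sq_sqrt (by positivity), Finset.sum_comm]
  simp [Matrix.trace, Matrix.mul_apply, sq]

lemma frobNorm_outer {p : ℕ} (a b : Vec p) : frobNorm (outer a b) = ‖a‖ * ‖b‖ := by
  rw [← sq_eq_sq₀ (frobNorm_nonneg _) (by positivity), frobNorm, Real.sq_sqrt (by positivity),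
    mul_pow, EuclideanSpace.real_norm_sq_eq, EuclideanSpace.real_norm_sq_eq, Finset.sum_mul_sum]
  simp [outer, toFn, Matrix.vecMulVec_apply, mul_pow]

lemma applyM_le_frob {p : ℕ} (A : Mat p) (v : Vec p) : ‖applyM A v‖ ≤ frobNorm A * ‖v‖ := by
  rw [← sq_le_sq₀ (norm_nonneg _) (by have := frobNorm_nonneg A; positivity), mul_pow, frobNorm,
    Real.sq_sqrt (by positivity), EuclideanSpace.real_norm_sq_eq, EuclideanSpace.real_norm_sq_eq,
    Finset.sum_mul]
  refine Finset.sum_le_sum fun i _ => ?_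
  change (∑ j, A i j * v j)^2 ≤ _
  exact Finset.sum_mul_sq_le_sq_mul_sq _ _ _

lemma psd_of_frob {p : ℕ} (B : Mat p) (c : ℝ) (h : frobNorm (B - 1) ≤ c) (v : Vec p) :
    (1 - c) * ‖v‖^2 ≤ ⟪v, applyM B v⟫ := by
  have h1 : ⟪v, applyM B v⟫ = ‖v‖^2 + ⟪v, applyM (B-1) v⟫ := by
    rw [applyM_sub, applyM_one, inner_sub_right, real_inner_self_eq_norm_sq]; ring
  have h2 := abs_real_inner_le_norm v (applyM (B-1) v)
  have h3 := applyM_le_frob (B-1) v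
  have h4 := (abs_le.1 h2).1
  have h5 : ‖v‖ * ‖applyM (B-1) v‖ ≤ c * ‖v‖^2 := by
    calc _ ≤ ‖v‖ * (c * ‖v‖) := by gcongr; exact h3.trans (by gcongr)
      _ = _ := by ring
  rw [h1]; linarith

/-- exact BFGS contraction in Frobenius norm -/
lemma bfgs_exact {p : ℕ} (B : Mat p) (hB : B.IsSymm) (h : frobNorm (B - 1) ≤ 1/2) (s : Vec p)
    (hs : s ≠ 0) : frobNorm (bfgsUpdate B s s - 1) ≤ frobNorm (B - 1) := by
  rw [← sq_le_sq₀ (frobNorm_nonneg _) (frobNorm_nonneg _)]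
  have hBt : Bᵀ = B := hB
  set v := applyM B s with hv
  set b := ⟪s, v⟫ with hb
  set g := ⟪s, s⟫ with hg
  have hns : 0 < ‖s‖^2 := by have := norm_pos_iff.2 hs; positivity
  have hgp : 0 < g := by rw [hg, real_inner_self_eq_norm_sq]; exact hns
  have hbp : 0 < b := by
    have := psd_of_frob B _ h s
    rw [← hv, ← hb] at this; linarith
  have hpsd : ∀ w, 0 ≤ ⟪w, applyM B w⟫ := fun w => by
    have := psd_of_frob B _ h w
    have h2 : 0 ≤ ‖w‖^2 := by positivity
    linarith
  set q := ⟪v, applyM B v⟫ with hq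
  set c := ⟪v, v⟫ with hc
  -- Cauchy-Schwarz for the form B
  have hcs : c^2 ≤ b * q := by
    have h1 := hpsd (b • v - c • s)
    have e1 : applyM B (b • v - c • s) = b • applyM B v - c • v := by
      simp [applyM, hv]
    have e2 : ⟪s, applyM B v⟫ = c := by rw [inner_applyM, hBt]
    have e3 : ⟪v, s⟫ = b := by rw [real_inner_comm]
    rw [e1] at h1
    simp only [inner_sub_left, inner_sub_right, inner_smul_left, inner_smul_right, e2, ← hq, ← hc, ← hb] at h1
    simp at h1
    have : 0 ≤ b * (b * q - c^2) := by nlinarith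
    have := nonneg_of_mul_nonneg_right this hbp
    linarith
  have hE : bfgsUpdate B s s - 1 = (B - 1) + (g⁻¹ • outer s s - b⁻¹ • outer v v) := by
    rw [bfgsUpdate, mul_outer, outer_mul, hBt, quadForm_eq, dotV_eq]; abel
  have hot : ∀ a : Vec p, (outer a a)ᵀ = outer a a := fun a => by
    simp [outer, Matrix.transpose_vecMulVec]
  have hEt : (B-1)ᵀ = B - 1 := by simp [hBt]
  rw [hE, frobNorm_sq, frobNorm_sq]
  have e3 : ⟪v, s⟫ = b := by rw [real_inner_comm]
  have e4 : (B * (B-1)).trace = (B * (B-1)).trace := rfl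
  have key : (((B - 1) + (g⁻¹ • outer s s - b⁻¹ • outer v v))ᵀ *
      ((B - 1) + (g⁻¹ • outer s s - b⁻¹ • outer v v))).trace =
      ((B-1)ᵀ * (B-1)).trace + 2 * (g⁻¹ * (b - g) - b⁻¹ * (q - c)) +
       (g⁻¹ * g⁻¹ * (g * g) - 2 * (g⁻¹ * b⁻¹ * (b * b)) + b⁻¹ * b⁻¹ * (c * c)) := by
    generalize hF : B - 1 = F at *
    have f1 : ∀ a, ⟪applyM F a, a⟫ = ⟪applyM B a, a⟫ - ⟪a,a⟫ := fun a => by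
      rw [← hF, applyM_sub, applyM_one, inner_sub_left]
    have f2 : ∀ a, ⟪a, applyM F a⟫ = ⟪applyM B a, a⟫ - ⟪a,a⟫ := fun a => by
      rw [real_inner_comm, f1]
    have f3 : ⟪applyM B v, v⟫ = q := by rw [real_inner_comm]
    simp only [Matrix.transpose_add, Matrix.transpose_sub, Matrix.transpose_smul, hot, hEt,
      add_mul, mul_add, sub_mul, mul_sub, smul_mul_assoc, mul_smul_comm, Matrix.trace_add,
      Matrix.trace_sub, Matrix.trace_smul, mul_outer, outer_mul, trace_outer, applyM_outer, f1, f2,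
      ← hv, f3, e3, ← hb, ← hg, ← hc, inner_smul_left, smul_eq_mul]
    simp
    ring
  rw [key]
  have k1 : g⁻¹ * g = 1 := inv_mul_cancel₀ hgp.ne'
  have k2 : b⁻¹ * b = 1 := inv_mul_cancel₀ hbp.ne'
  set G := g⁻¹
  set K := b⁻¹
  have hK : 0 < K := inv_pos.2 hbp
  have : K^2 * c^2 ≤ K * q := by
    calc K^2 * c^2 ≤ K^2 * (b * q) := by gcongr
      _ = K * (K * b) * q := by ring
      _ = _ := by rw [k2]; ring
  have i1 : G * G * (g * g) = 1 := by rw [show G * G * (g*g) = (G*g)^2 by ring, k1]; norm_num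
  have i2 : G * K * (b * b) = G * b := by rw [show G * K * (b*b) = G * b * (K * b) by ring, k2]; ring
  rw [i1, i2]
  nlinarith [sq_nonneg (K * c - 1)]

lemma bfgs_perturb {p : ℕ} (s y : Vec p) (hs : s ≠ 0) (τ : ℝ) (hτ : τ ≤ 1/2)
    (h : ‖y - s‖ ≤ τ * ‖s‖) :
    frobNorm ((dotV y s)⁻¹ • outer y y - (dotV s s)⁻¹ • outer s s) ≤ 8 * τ := by
  rw [dotV_eq, dotV_eq]
  obtain ⟨d, rfl⟩ : ∃ d, y = s + d := ⟨y - s, by abel⟩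
  rw [add_sub_cancel_left] at h
  have hsp := norm_pos_iff.2 hs
  set m := ‖s‖
  have hτ0 : 0 ≤ τ := by
    have := (norm_nonneg d).trans h
    exact nonneg_of_mul_nonneg_left this hsp
  have e1 : ⟪s + d, s⟫ = m^2 + ⟪d, s⟫ := by rw [inner_add_left, real_inner_self_eq_norm_sq]
  have hds : |⟪d, s⟫| ≤ τ * m^2 := by
    refine (abs_real_inner_le_norm d s).trans ?_
    calc ‖d‖ * m ≤ τ * m * m := by gcongr
      _ = _ := by ring
  rw [e1, real_inner_self_eq_norm_sq]
  set k := ⟪d, s⟫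
  have hm2 : 0 < m^2 := by positivity
  have hlow : m^2/2 ≤ m^2 + k := by
    have := (abs_le.1 hds).1
    nlinarith
  have hpos : 0 < m^2 + k := by linarith
  have e2 : (m^2 + k)⁻¹ • outer (s + d) (s + d) - (m^2)⁻¹ • outer s s =
      (m^2 + k)⁻¹ • (outer (s+d) d + outer d s + (-(k / m^2)) • outer s s) := by
    simp only [outer_add_left, outer_add_right, smul_add, smul_smul]
    have : (m^2)⁻¹ • outer s s = (m^2 + k)⁻¹ • outer s s + ((m^2 + k)⁻¹ * (k/m^2)) • outer s s := by
      rw [← add_smul]; congr 1; field_simp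
    have h3 : (m^2 + k)⁻¹ * (-(k/m^2)) = -((m^2 + k)⁻¹ * (k/m^2)) := by ring
    rw [this, h3, neg_smul]; abel
  rw [e2, frobNorm_smul, abs_of_pos (inv_pos.2 hpos), inv_mul_le_iff₀ hpos]
  have n1 : frobNorm (outer (s+d) d) ≤ 3/2 * τ * m^2 := by
    rw [frobNorm_outer]
    have : ‖s + d‖ ≤ 3/2 * m := (norm_add_le _ _).trans (by change m + ‖d‖ ≤ _; nlinarith)
    calc _ ≤ (3/2 * m) * (τ * m) := by gcongr
      _ = _ := by ring
  have n2 : frobNorm (outer d s) ≤ τ * m^2 := by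
    rw [frobNorm_outer]
    calc ‖d‖ * m ≤ τ * m * m := by gcongr
      _ = _ := by ring
  have n3 : frobNorm ((-(k / m^2)) • outer s s) ≤ τ * m^2 := by
    rw [frobNorm_smul, frobNorm_outer, abs_neg, abs_div, abs_of_pos hm2]
    calc |k| / m^2 * (m * m) = |k| := by field_simp
      _ ≤ _ := hds
  have := frobNorm_add (outer (s+d) d + outer d s) ((-(k / m^2)) • outer s s)
  have := frobNorm_add (outer (s+d) d) (outer d s)
  nlinarith

lemma bfgs_step0 {p : ℕ} (B : Mat p) (hB : B.IsSymm) (h : frobNorm (B - 1) ≤ 1/2) (s y : Vec p)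
    (hs : s ≠ 0) (τ : ℝ) (hτ : τ ≤ 1/2) (hy : ‖y - s‖ ≤ τ * ‖s‖) :
    frobNorm (bfgsUpdate B s y - 1) ≤ frobNorm (B - 1) + 8 * τ := by
  have e : bfgsUpdate B s y - 1 = (bfgsUpdate B s s - 1) +
      ((dotV y s)⁻¹ • outer y y - (dotV s s)⁻¹ • outer s s) := by
    rw [bfgsUpdate, bfgsUpdate]; abel
  rw [e]
  exact (frobNorm_add _ _).trans (add_le_add (bfgs_exact B hB h s hs) (bfgs_perturb s y hs τ hτ hy))

lemma bfgs_conj {p : ℕ} (M N B : Mat p) (hM : Mᵀ = M) (hMN : M * N = 1)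
    (hB : B.IsSymm) (s y : Vec p) :
    M * bfgsUpdate B s y * M = bfgsUpdate (M * B * M) (applyM N s) (applyM M y) := by
  have hMs : applyM M (applyM N s) = s := by rw [← applyM_mul, hMN, applyM_one]
  have hBt : Bᵀ = B := hB
  have ht : (M * B * M)ᵀ = M * B * M := by simp [hM, hBt, mul_assoc]
  have h1 : applyM (M * B * M) (applyM N s) = applyM M (applyM B s) := by
    rw [applyM_mul, applyM_mul, hMs]
  rw [bfgsUpdate, bfgsUpdate]
  simp only [mul_outer, outer_mul, quadForm_eq, dotV_eq, ht, hBt, h1, mul_add, mul_sub, add_mul,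
    sub_mul, smul_mul_assoc, mul_smul_comm, hM]
  have d1 : ⟪applyM M y, applyM N s⟫ = ⟪y, s⟫ := by
    rw [real_inner_comm, inner_applyM, hM, hMs, real_inner_comm]
  have d2 : ⟪applyM N s, applyM M (applyM B s)⟫ = ⟪s, applyM B s⟫ := by
    rw [inner_applyM, hM, hMs]
  rw [d1, d2]

lemma grad_est {p n : ℕ} (P : IQNProblem p n) (i : Fin n) (ρ : ℝ) (u w : Vec p)
    (hu : ‖u - P.xstar‖ ≤ ρ) (hw : ‖w - P.xstar‖ ≤ ρ) :
    ‖gradient (P.f i) u - gradient (P.f i) w - applyM (P.Hess i P.xstar) (u - w)‖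
      ≤ P.Ltil * ρ * ‖u - w‖ := by
  refine Convex.norm_image_sub_le_of_norm_hasFDerivWithin_le' (𝕜 := ℝ)
    (s := Metric.closedBall P.xstar ρ)
    (f' := fun x => Matrix.toEuclideanCLM (𝕜 := ℝ) (P.Hess i x))
    (fun x _ => (P.hHess i x).hasFDerivWithinAt) ?_ (convex_closedBall _ _) ?_ ?_
  · intro x hx
    have h := P.hLip i x P.xstar
    rw [opNorm, map_sub] at h
    refine h.trans ?_
    have := P.hLtil
    gcongr
    simpa [dist_eq_norm] using hx
  · simpa [dist_eq_norm] using hw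
  · simpa [dist_eq_norm] using hu

lemma sum_grad_zero {p n : ℕ} (P : IQNProblem p n) : ∑ i, gradient (P.f i) P.xstar = 0 := by
  have hd : ∀ i, HasGradientAt (P.f i) (gradient (P.f i) P.xstar) P.xstar := fun i =>
    (((P.hC2 i).differentiable (by norm_num)) P.xstar).hasGradientAt
  have h1 : HasFDerivAt (fun x => (n:ℝ)⁻¹ * ∑ i, P.f i x)
      ((n:ℝ)⁻¹ • ∑ i, (InnerProductSpace.toDual ℝ (Vec p)) (gradient (P.f i) P.xstar)) P.xstar := by
    have h2 : HasFDerivAt (fun x => ∑ i, P.f i x)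
      (∑ i, (InnerProductSpace.toDual ℝ (Vec p)) (gradient (P.f i) P.xstar)) P.xstar :=
      HasFDerivAt.fun_sum fun i _ => (hd i).hasFDerivAt
    exact h2.const_mul _
  have h3 : HasGradientAt (fun x => (n:ℝ)⁻¹ * ∑ i, P.f i x)
      ((n:ℝ)⁻¹ • ∑ i, gradient (P.f i) P.xstar) P.xstar := by
    rw [hasGradientAt_iff_hasFDerivAt]
    refine h1.congr_fderiv ?_
    ext v
    simp [inner_smul_left, sum_inner]
  have h4 := h3.gradient
  rw [P.hopt] at h4
  have hn : (n:ℝ)⁻¹ ≠ 0 := by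
    have := P.hn
    have : (n:ℝ) ≠ 0 := by exact_mod_cast (by omega : n ≠ 0)
    exact inv_ne_zero this
  exact (smul_eq_zero.1 h4.symm).resolve_left hn

lemma qlow {p : ℕ} (M N B : Mat p) (m : ℝ) (hm : 1 ≤ m) (hM : Mᵀ = M) (hMN : M * N = 1)
    (hmM : opNorm M ≤ m) (h : frobNorm (M * B * M - 1) ≤ 1/2) (v : Vec p) :
    ‖v‖^2 ≤ 2 * m^2 * ⟪v, applyM B v⟫ := by
  have hMs : applyM M (applyM N v) = v := by rw [← applyM_mul, hMN, applyM_one]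
  have h1 := psd_of_frob _ _ h (applyM N v)
  rw [applyM_mul, applyM_mul, hMs, inner_applyM, hM, hMs] at h1
  have h2 : ‖v‖ ≤ m * ‖applyM N v‖ := by
    calc ‖v‖ = ‖applyM M (applyM N v)‖ := by rw [hMs]
      _ ≤ opNorm M * ‖applyM N v‖ := applyM_norm_le _ _
      _ ≤ _ := by gcongr
  calc ‖v‖^2 ≤ (m * ‖applyM N v‖)^2 := by gcongr
    _ = 2 * m^2 * ((1 - 1/2) * ‖applyM N v‖^2) := by ring
    _ ≤ _ := by gcongr

lemma err_le {p : ℕ} (M N A : Mat p) (m σ : ℝ) (hm : 1 ≤ m)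
    (hMN : M * N = 1) (hNM : N * M = 1)
    (hmN : opNorm N ≤ m) (hσ : 0 ≤ σ) (h : ∀ v, ‖applyM (M * A * M) v‖ ≤ σ * ‖v‖) (v : Vec p) :
    ‖applyM A v‖ ≤ m^2 * σ * ‖v‖ := by
  have e : A = N * ((M * A * M) * N) := by
    calc A = (N * M) * A * (M * N) := by rw [hMN, hNM]; simp
      _ = _ := by simp only [mul_assoc]
  have b : ∀ w, ‖applyM N w‖ ≤ m * ‖w‖ := fun w =>
    (applyM_norm_le N w).trans (by gcongr)
  calc ‖applyM A v‖ = ‖applyM N (applyM (M * A * M) (applyM N v))‖ := by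
        rw [← applyM_mul (M * A * M), ← applyM_mul, ← e]
    _ ≤ m * (σ * (m * ‖v‖)) := by
        refine (b _).trans ?_
        gcongr
        refine (h _).trans ?_
        gcongr
        exact b v
    _ = _ := by ring

/-- one IQN step -/
lemma iqn_step {p n : ℕ} (P : IQNProblem p n) (M N : Fin n → Mat p) (m η ρ : ℝ) (hm : 1 ≤ m)
    (hMt : ∀ i, (M i)ᵀ = M i) (hMN : ∀ i, M i * N i = 1) (hNM : ∀ i, N i * M i = 1)
    (hMHM : ∀ i, M i * P.Hess i P.xstar * M i = 1)
    (hmM : ∀ i, opNorm (M i) ≤ m) (hmN : ∀ i, opNorm (N i) ≤ m)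
    (hη : η ≤ 1/2) (hη0 : 0 ≤ η) (S : IQNState P) (t : ℕ)
    (hσ : ∀ i, frobNorm (M i * S.B i t * M i - 1) ≤ η)
    (hρ : ∀ i, ‖S.z i t - P.xstar‖ ≤ ρ) :
    ‖S.x (t+1) - P.xstar‖ ≤ 2 * m^2 * (m^2 * η + P.Ltil * ρ) * ρ := by
  have hn := P.hn
  have hn0 : (n:ℝ) ≠ 0 := by exact_mod_cast (by omega : n ≠ 0)
  have hnp : (0:ℝ) < n := by exact_mod_cast (by omega : 0 < n)
  set w := S.x (t+1) - P.xstar with hw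
  have hρ0 : 0 ≤ ρ := (norm_nonneg _).trans (hρ ⟨0, hn⟩)
  have hL := P.hLtil
  set g : Fin n → Vec p := fun i => applyM (S.B i t - P.Hess i P.xstar) (S.z i t - P.xstar) -
    (gradient (P.f i) (S.z i t) - gradient (P.f i) P.xstar -
      applyM (P.Hess i P.xstar) (S.z i t - P.xstar)) with hg
  set K := (m^2 * η + P.Ltil * ρ) * ρ with hK
  have hK0 : 0 ≤ K := by positivity
  have hgb : ∀ i, ‖g i‖ ≤ K := fun i => by
    have h1 := err_le (M i) (N i) (S.B i t - P.Hess i P.xstar) m η hm (hMN i) (hNM i) (hmN i) hη0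
      (fun v => by
        rw [mul_sub, sub_mul, hMHM]
        refine (applyM_le_frob _ v).trans ?_
        gcongr
        exact hσ i) (S.z i t - P.xstar)
    have h2 := grad_est P i ρ (S.z i t) P.xstar (hρ i) (by simpa using hρ0)
    refine (norm_sub_le _ _).trans ?_
    calc _ ≤ m^2 * η * ‖S.z i t - P.xstar‖ + P.Ltil * ρ * ‖S.z i t - P.xstar‖ := add_le_add h1 h2
      _ ≤ m^2 * η * ρ + P.Ltil * ρ * ρ := by
        gcongr
        · exact hρ i
        · exact hρ i
      _ = K := by rw [hK]; ring
  have hsum : ∑ i, applyM (S.B i t) w = ∑ i, g i := by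
    have h1 : applyM ((n : ℝ)⁻¹ • ∑ i, S.B i t) (S.x (t+1)) = ((n : ℝ)⁻¹ • ∑ i, applyM (S.B i t) (S.z i t)
        - (n : ℝ)⁻¹ • ∑ i, gradient (P.f i) (S.z i t)) := by
      rw [S.hx t, ← applyM_mul, Matrix.mul_nonsing_inv _ ((Matrix.isUnit_iff_isUnit_det _).1 (S.hinv t)),
        applyM_one]
    have h2 : applyM ((n : ℝ)⁻¹ • ∑ i, S.B i t) (S.x (t+1)) =
        (n:ℝ)⁻¹ • ∑ i, applyM (S.B i t) (S.x (t+1)) := by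
      simp [applyM]
    rw [h2, ← smul_sub] at h1
    have h3 := smul_right_injective _ (inv_ne_zero hn0) h1
    simp only [hg, hw, applyM_sub, applyM_vsub, Finset.sum_sub_distrib]
    rw [h3, sum_grad_zero]
    abel
  have hq : ∀ i, ‖w‖^2 ≤ 2 * m^2 * ⟪w, applyM (S.B i t) w⟫ := fun i =>
    qlow (M i) (N i) (S.B i t) m hm (hMt i) (hMN i) (hmM i) ((hσ i).trans hη) w
  have h1 : n * ‖w‖^2 ≤ 2 * m^2 * ∑ i, ⟪w, applyM (S.B i t) w⟫ := by
    have := Finset.sum_le_sum fun i (_ : i ∈ Finset.univ) => hq i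
    rw [← Finset.mul_sum] at this
    simpa using this
  have h2 : ∑ i, ⟪w, applyM (S.B i t) w⟫ ≤ n * (‖w‖ * K) := by
    rw [← inner_sum, hsum, inner_sum]
    have : ∀ i ∈ Finset.univ, ⟪w, g i⟫ ≤ ‖w‖ * K := fun i _ =>
      (real_inner_le_norm _ _).trans (by gcongr; exact hgb i)
    simpa using Finset.sum_le_sum this
  have h3 : ‖w‖^2 ≤ 2 * m^2 * K * ‖w‖ := by
    have : (n:ℝ) * ‖w‖^2 ≤ n * (2 * m^2 * K * ‖w‖) := by
      calc _ ≤ 2 * m^2 * (n * (‖w‖ * K)) := h1.trans (by gcongr)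
        _ = _ := by ring
    exact le_of_mul_le_mul_left this hnp
  have h4 : ‖w‖ ≤ 2 * m^2 * K := by
    rcases (norm_nonneg w).eq_or_lt with h | h
    · rw [← h]; positivity
    · rw [sq] at h3; exact le_of_mul_le_mul_right h3 h
  calc _ ≤ _ := h4
    _ = _ := by rw [hK]; ring

lemma bfgs_step {p n : ℕ} (P : IQNProblem p n) (i : Fin n) (M N B : Mat p) (m ρ : ℝ) (hm : 1 ≤ m)
    (hMt : Mᵀ = M) (hMN : M * N = 1)
    (hMHM : M * P.Hess i P.xstar * M = 1) (hmM : opNorm M ≤ m)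
    (hB : B.IsSymm) (hσ : frobNorm (M * B * M - 1) ≤ 1/2) (u w : Vec p) (huw : u - w ≠ 0)
    (hu : ‖u - P.xstar‖ ≤ ρ) (hw : ‖w - P.xstar‖ ≤ ρ) (hτ : m^2 * P.Ltil * ρ ≤ 1/2) :
    frobNorm (M * bfgsUpdate B (u - w) (gradient (P.f i) u - gradient (P.f i) w) * M - 1) ≤
      frobNorm (M * B * M - 1) + 8 * (m^2 * P.Ltil * ρ) := by
  have hρ0 : 0 ≤ ρ := (norm_nonneg _).trans hu
  have hL := P.hLtil
  have hMs : ∀ v, applyM M (applyM N v) = v := fun v => by rw [← applyM_mul, hMN, applyM_one]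
  have hBt : Bᵀ = B := hB
  rw [bfgs_conj M N B hMt hMN hB]
  have hN : M * P.Hess i P.xstar = N := by
    calc _ = M * P.Hess i P.xstar * (M * N) := by rw [hMN, mul_one]
      _ = (M * P.Hess i P.xstar * M) * N := by simp only [mul_assoc]
      _ = N := by rw [hMHM, one_mul]
  refine bfgs_step0 _ ?_ hσ _ _ ?_ _ hτ ?_
  · change (M * B * M)ᵀ = M * B * M
    simp [hMt, hBt, mul_assoc]
  · intro h
    apply huw
    rw [← hMs (u - w), h]
    simp [applyM]
  · have e : applyM M (gradient (P.f i) u - gradient (P.f i) w) - applyM N (u - w) =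
        applyM M (gradient (P.f i) u - gradient (P.f i) w - applyM (P.Hess i P.xstar) (u - w)) := by
      rw [applyM_vsub M (gradient (P.f i) u - gradient (P.f i) w), ← applyM_mul, hN]
    rw [e]
    have h2 : ‖u - w‖ ≤ m * ‖applyM N (u - w)‖ := by
      calc ‖u - w‖ = ‖applyM M (applyM N (u-w))‖ := by rw [hMs]
        _ ≤ opNorm M * ‖applyM N (u-w)‖ := applyM_norm_le _ _
        _ ≤ _ := by gcongr
    calc _ ≤ opNorm M * _ := applyM_norm_le _ _
      _ ≤ m * (P.Ltil * ρ * (m * ‖applyM N (u - w)‖)) := by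
        gcongr
        exact (grad_est P i ρ u w hu hw).trans (by gcongr)
      _ = _ := by ring

lemma B_bounds {p : ℕ} (M N B : Mat p) (m : ℝ) (hm : 1 ≤ m) (hM : Mᵀ = M) (hMN : M * N = 1)
    (hNM : N * M = 1) (hmM : opNorm M ≤ m) (hmN : opNorm N ≤ m)
    (h : frobNorm (M * B * M - 1) ≤ 1/2) :
    opNorm B ≤ 2 * m^2 ∧ IsUnit B ∧ opNorm B⁻¹ ≤ 2 * m^2 := by
  have hlow : ∀ v, ‖v‖ ≤ 2 * m^2 * ‖applyM B v‖ := fun v => by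
    have h1 := qlow M N B m hm hM hMN hmM h v
    rcases (norm_nonneg v).eq_or_lt with h0 | h0
    · rw [← h0]; positivity
    · have h2 := real_inner_le_norm v (applyM B v)
      have : ‖v‖ * ‖v‖ ≤ ‖v‖ * (2 * m^2 * ‖applyM B v‖) := by
        calc _ = ‖v‖^2 := by ring
          _ ≤ 2 * m^2 * (‖v‖ * ‖applyM B v‖) := h1.trans (by gcongr)
          _ = _ := by ring
      exact le_of_mul_le_mul_left this h0
  have hu : IsUnit B := by
    rw [← Matrix.mulVec_injective_iff_isUnit]
    intro a b hab
    have h1 := hlow (WithLp.toLp 2 (a - b))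
    have h2 : applyM B (WithLp.toLp 2 (a - b)) = 0 := by
      rw [applyM, Matrix.toEuclideanCLM_toLp, Matrix.mulVec_sub]
      have : B *ᵥ a = B *ᵥ b := hab
      rw [this]; simp
    rw [h2, norm_zero, mul_zero] at h1
    have h3 := norm_le_zero_iff.1 h1
    have h4 : a - b = 0 := congrArg (WithLp.ofLp) h3
    exact sub_eq_zero.1 h4
  refine ⟨?_, hu, ?_⟩
  · refine opNorm_le _ _ (by positivity) fun v => ?_
    have := err_le M N B m (3/2) hm hMN hNM hmN (by norm_num) (fun v => by
      have e : applyM (M * B * M) v = applyM (M * B * M - 1) v + v := by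
        rw [applyM_sub, applyM_one]; abel
      rw [e]
      refine (norm_add_le _ _).trans ?_
      have h5 : ‖applyM (M * B * M - 1) v‖ ≤ 1/2 * ‖v‖ := (applyM_le_frob _ v).trans (by gcongr)
      linarith) v
    refine this.trans ?_
    have : m^2 * (3/2) ≤ 2 * m^2 := by nlinarith
    gcongr
  · refine opNorm_le _ _ (by positivity) fun v => ?_
    have := hlow (applyM B⁻¹ v)
    rwa [← applyM_mul, Matrix.mul_nonsing_inv _ ((Matrix.isUnit_iff_isUnit_det _).1 hu),
      applyM_one] at this

/-- number of updates of index `i` before time `t` -/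
def kcount (n i t : ℕ) : ℕ := (t + (n - 1 - i)) / n

lemma kcount_zero (n i : ℕ) (hn : 1 ≤ n) : kcount n i 0 = 0 := by
  rw [kcount]; apply Nat.div_eq_of_lt; omega

lemma kcount_ge (n i t : ℕ) : t / n ≤ kcount n i t := Nat.div_le_div_right (by omega)

lemma kcount_cyc (n t : ℕ) (hn : 1 ≤ n) : kcount n (t % n) t = t / n := by
  have h1 := Nat.div_add_mod t n
  have h2 := Nat.mod_lt t hn
  rw [kcount]
  have : t + (n - 1 - t % n) = (n - 1) + n * (t / n) := by omega
  rw [this, Nat.add_mul_div_left _ _ hn, Nat.div_eq_of_lt (by omega), zero_add]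

lemma kcount_cyc_succ (n t : ℕ) (hn : 1 ≤ n) : kcount n (t % n) (t+1) = t / n + 1 := by
  have h1 := Nat.div_add_mod t n
  have h2 := Nat.mod_lt t hn
  rw [kcount]
  have : t + 1 + (n - 1 - t % n) = n * (t / n + 1) := by rw [mul_add]; omega
  rw [this, Nat.mul_div_cancel_left _ hn]

lemma kcount_ne (n i t : ℕ) (hi : i < n) (h : i ≠ t % n) :
    kcount n i (t+1) = kcount n i t := by
  rw [kcount, kcount, show t + 1 + (n - 1 - i) = (t + (n-1-i)) + 1 by omega, Nat.succ_div, if_neg,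
    add_zero]
  rintro ⟨c, hc⟩
  apply h
  have h3 : t + n = i + n * c := by omega
  have h4 : (t + n) % n = (i + n * c) % n := by rw [h3]
  rw [Nat.add_mod_right, Nat.add_mul_mod_self_left, Nat.mod_eq_of_lt hi] at h4
  exact h4.symm

lemma iqn_main {p n : ℕ} (P : IQNProblem p n) (M N : Fin n → Mat p) (m δ ε r : ℝ) (hm : 1 ≤ m)
    (hMt : ∀ i, (M i)ᵀ = M i) (hMN : ∀ i, M i * N i = 1) (hNM : ∀ i, N i * M i = 1)
    (hMHM : ∀ i, M i * P.Hess i P.xstar * M i = 1)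
    (hmM : ∀ i, opNorm (M i) ≤ m) (hmN : ∀ i, opNorm (N i) ≤ m)
    (hr0 : 0 < r) (hr1 : r < 1) (hδ : 0 < δ) (hδ4 : δ ≤ 1/4)
    (hδr : 4 * m^4 * δ ≤ r/2) (hεr : 2 * m^2 * P.Ltil * ε ≤ r/2)
    (hεδ : 8 * (m^2 * P.Ltil * ε) ≤ δ * (1 - r)) (S : IQNState P)
    (h0 : ‖S.x 0 - P.xstar‖ < ε)
    (hB0 : ∀ i, frobNorm (M i * S.B i 0 * M i - 1) ≤ δ) (t : ℕ) :
    ((∀ i, ‖S.z i t - P.xstar‖ ≤ r ^ (kcount n i t) * ‖S.x 0 - P.xstar‖) ∧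
    (∀ i, frobNorm (M i * S.B i t * M i - 1) ≤ δ + δ * (1 - r ^ (kcount n i t)))) ∧
    ‖S.x (t+1) - P.xstar‖ ≤ r ^ (t/n+1) * ‖S.x 0 - P.xstar‖ := by
  have hn := P.hn
  have hL := P.hLtil
  set e := ‖S.x 0 - P.xstar‖
  have he : 0 ≤ e := norm_nonneg _
  have hstep : ∀ t, (∀ i, ‖S.z i t - P.xstar‖ ≤ r ^ (kcount n i t) * e) →
      (∀ i, frobNorm (M i * S.B i t * M i - 1) ≤ δ + δ * (1 - r ^ (kcount n i t))) →
      ‖S.x (t+1) - P.xstar‖ ≤ r ^ (t/n+1) * e := by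
    intro t hz hB
    have h1 := iqn_step P M N m (2 * δ) (r ^ (t/n) * e) hm hMt hMN hNM hMHM hmM hmN (by linarith)
      (by linarith) S t (fun i => (hB i).trans (by
        have : 0 ≤ δ * r ^ (kcount n i t) := by positivity
        linarith)) (fun i => (hz i).trans (by
        gcongr ?_ * _
        exact pow_le_pow_of_le_one hr0.le hr1.le (kcount_ge n i t)))
    refine h1.trans ?_
    rw [pow_succ r, mul_comm _ r, mul_assoc r]
    gcongr
    have h2 : r ^ (t/n) * e ≤ ε := by
      have : r ^ (t/n) ≤ 1 := pow_le_one₀ hr0.le hr1.le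
      nlinarith
    calc _ ≤ 2 * m^2 * (m^2 * (2 * δ) + P.Ltil * ε) := by gcongr
      _ = 4 * m^4 * δ + 2 * m^2 * P.Ltil * ε := by ring
      _ ≤ r := by linarith
  have hinv : (∀ i, ‖S.z i t - P.xstar‖ ≤ r ^ (kcount n i t) * e) ∧
    (∀ i, frobNorm (M i * S.B i t * M i - 1) ≤ δ + δ * (1 - r ^ (kcount n i t))) := by
    induction t with
    | zero =>
      constructor
      · intro i; rw [S.hz0, kcount_zero _ _ hn]; simp [e]
      · intro i; rw [kcount_zero _ _ hn]; simpa using hB0 i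
    | succ t ih =>
      obtain ⟨hz, hB⟩ := ih
      have hx := hstep t hz hB
      have hcv : ((cyc hn t : Fin n) : ℕ) = t % n := rfl
      constructor
      · intro i
        by_cases hi : i = cyc hn t
        · subst hi
          rw [S.hzupd, hcv, kcount_cyc_succ _ _ hn]; exact hx
        · rw [S.hzfix t i hi, kcount_ne n i t i.2 (fun h => hi (Fin.ext h))]; exact hz i
      · intro i
        by_cases hi : i = cyc hn t
        · subst hi
          have hzi := hz (cyc hn t)
          have hBi := hB (cyc hn t)
          rw [hcv, kcount_cyc _ _ hn] at hzi hBi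
          rw [S.hBupd, hcv, kcount_cyc_succ _ _ hn]
          have hq1 : r ^ (t/n) ≤ 1 := pow_le_one₀ hr0.le hr1.le
          have hq0 : 0 < r ^ (t/n) := by positivity
          set q := r ^ (t/n) with hq
          have hc : 0 < m^2 * P.Ltil := by positivity
          have hce : m^2 * P.Ltil * e ≤ m^2 * P.Ltil * ε := by gcongr
          have hτ : 8 * (m^2 * P.Ltil * (q * e)) ≤ δ * (1 - r) * q := by
            calc _ = 8 * (m^2 * P.Ltil * e) * q := by ring
              _ ≤ _ := mul_le_mul_of_nonneg_right (by linarith) hq0.le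
          have hδq : δ * (1 - r) * q ≤ 1 := by
            have : δ * (1-r) ≤ 1 := by nlinarith
            have : 0 ≤ δ * (1-r) := mul_nonneg hδ.le (by linarith)
            nlinarith
          have := bfgs_step P (cyc hn t) (M (cyc hn t)) (N (cyc hn t)) (S.B (cyc hn t) t) m (q * e)
            hm (hMt _) (hMN _) (hMHM _) (hmM _) (S.hsym _ _) (hBi.trans (by nlinarith))
            (S.z (cyc hn t) (t+1)) (S.z (cyc hn t) t) (S.hs t)
            (by
              rw [S.hzupd]
              refine hx.trans ?_
              rw [pow_succ r, ← hq]
              gcongr ?_ * _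
              nlinarith) hzi (by linarith)
          refine this.trans ?_
          rw [pow_succ r, ← hq]
          linarith
        · rw [S.hBfix t i hi, kcount_ne n i t i.2 (fun h => hi (Fin.ext h))]; exact hB i
  exact ⟨hinv, hstep t hinv.1 hinv.2⟩

end Helpers

/-- local linear convergence of IQN, Lemma 3 of the paper. -/
theorem stmt5 {p n : ℕ} (P : IQNProblem p n) (M : Fin n → Mat p)
    (hM : ∀ i, (M i).PosDef ∧ M i * P.Hess i P.xstar * M i = 1)
    (r : ℝ) (hr : r ∈ Set.Ioo (0:ℝ) 1) :
    ∃ ε > (0:ℝ), ∃ δ > (0:ℝ), ∀ S : IQNState P,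
      ‖S.x 0 - P.xstar‖ < ε →
      (∀ i, wNorm (M i) (S.B i 0 - P.Hess i P.xstar) < δ) →
      (∀ t, 1 ≤ t → ‖S.x t - P.xstar‖ ≤ r ^ ((t-1)/n + 1) * ‖S.x 0 - P.xstar‖) ∧
      ∃ C > (0:ℝ), ∀ i t, opNorm (S.B i t) ≤ C ∧
        IsUnit (S.B i t) ∧ opNorm (S.B i t)⁻¹ ≤ C := by

  obtain ⟨hr0, hr1⟩ := hr
  have hL := P.hLtil
  have hdet : ∀ i, IsUnit (M i).det := fun i => (hM i).1.det_pos.ne'.isUnit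
  have hMt : ∀ i, (M i)ᵀ = M i := fun i => by
    have := (hM i).1.isHermitian
    rwa [Matrix.IsHermitian, Matrix.conjTranspose_eq_transpose_of_trivial] at this
  have hMN : ∀ i, M i * (M i)⁻¹ = 1 := fun i => Matrix.mul_nonsing_inv _ (hdet i)
  have hNM : ∀ i, (M i)⁻¹ * M i = 1 := fun i => Matrix.nonsing_inv_mul _ (hdet i)
  set m : ℝ := 1 + ∑ i, (opNorm (M i) + opNorm (M i)⁻¹) with hmdef
  have hterm : ∀ i, opNorm (M i) + opNorm (M i)⁻¹ ≤ ∑ i, (opNorm (M i) + opNorm (M i)⁻¹) :=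
    fun i => Finset.single_le_sum (f := fun i => opNorm (M i) + opNorm (M i)⁻¹)
      (fun j _ => add_nonneg (opNorm_nonneg _) (opNorm_nonneg _)) (Finset.mem_univ i)
  have hm : 1 ≤ m := by
    have : 0 ≤ ∑ i, (opNorm (M i) + opNorm (M i)⁻¹) :=
      Finset.sum_nonneg fun j _ => add_nonneg (opNorm_nonneg _) (opNorm_nonneg _)
    linarith
  have hmM : ∀ i, opNorm (M i) ≤ m := fun i => by
    have := hterm i; have := opNorm_nonneg (M i)⁻¹; linarith
  have hmN : ∀ i, opNorm (M i)⁻¹ ≤ m := fun i => by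
    have := hterm i; have := opNorm_nonneg (M i); linarith
  clear_value m
  have hm0 : 0 < m := by linarith
  have h1r : 0 < 1 - r := by linarith
  obtain ⟨δ, hδ, hδ4, hδr⟩ : ∃ δ : ℝ, 0 < δ ∧ δ ≤ 1/4 ∧ 4 * m^4 * δ ≤ r/2 := by
    refine ⟨min (1/4) (r / (8 * m^4)), by positivity, min_le_left _ _, ?_⟩
    calc _ ≤ 4 * m^4 * (r / (8 * m^4)) := by gcongr; exact min_le_right _ _
      _ = r/2 := by field_simp; norm_num
  obtain ⟨ε, hε, hεr, hεδ⟩ : ∃ ε : ℝ, 0 < ε ∧ 2 * m^2 * P.Ltil * ε ≤ r/2 ∧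
      8 * (m^2 * P.Ltil * ε) ≤ δ * (1 - r) := by
    refine ⟨min (r / (4 * m^2 * P.Ltil)) (δ * (1-r) / (8 * m^2 * P.Ltil)), by positivity, ?_, ?_⟩
    · calc _ ≤ 2 * m^2 * P.Ltil * (r / (4 * m^2 * P.Ltil)) := by gcongr; exact min_le_left _ _
        _ = r/2 := by field_simp; norm_num
    · calc _ ≤ 8 * (m^2 * P.Ltil * (δ * (1-r) / (8 * m^2 * P.Ltil))) := by
            gcongr; exact min_le_right _ _
        _ = _ := by field_simp
  refine ⟨ε, hε, δ, hδ, fun S h0 hB0 => ?_⟩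
  have hmain := iqn_main P M (fun i => (M i)⁻¹) m δ ε r hm hMt hMN hNM (fun i => (hM i).2) hmM hmN
    hr0 hr1 hδ hδ4 hδr hεr hεδ S h0 (fun i => by
      have := (hB0 i).le
      rwa [wNorm, mul_sub, sub_mul, (hM i).2] at this)
  refine ⟨?_, 2 * m^2, by positivity, fun i t => ?_⟩
  · intro t ht
    obtain ⟨k, rfl⟩ : ∃ k, t = k + 1 := ⟨t - 1, by omega⟩
    exact (hmain k).2
  · refine B_bounds (M i) (M i)⁻¹ (S.B i t) m hm (hMt i) (hMN i) (hNM i) (hmM i) (hmN i) ?_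
    have := (hmain t).1.2 i
    have h2 : 0 ≤ δ * r ^ (kcount n i t) := by positivity
    linarith

end
end
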